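/- Let X be a δ-hyperbolic space with δ > 0, and let (z_n) be a sequence in X converging to a boundary point, i.e., (z_n|z_m)_x → ∞ as min(n,m) → ∞. Then for all x, y ∈ X: limsup_n b_{z_n}(x,y) − liminf_n b_{z_n}(x,y) ≤ C2, where C2 = C2(δ) = (30 log 2)·δ. -/

import Mathlib

/-!
Write `K = (z|w)_x`. If `K` is large compared with `d(x,y)` and `δ`, then the cocycles of `z` and
`w` at `(x,y)` differ by at most `4δ`. Indeed, in the geodesic quadrilateral `x, y, w, z` each point
of `[x,z]` is `2δ`-close to `[x,y] ∪ [y,w] ∪ [w,z]`. The point `p` of `[x,z]` at distance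
`d(x,y) + 3δ` from `x` is too far from `x` to be close to `[x,y]`, and too near to `x` to be close to
`[w,z]`, all of whose points are at distance at least `K` from `x`. Hence `p` is `2δ`-close to some
`q ∈ [y,w]`, and going through `p` and `q` gives `d(y,z) + d(x,w) ≤ d(y,w) + d(x,z) + 4δ`
(`distCocycle_le_add`). So the values `b_{z_n}(x,y)` eventually differ by at most `4δ`, which is
less than `(30 log 2) δ`.
-/

open Metric Set Filter

/-- The Gromov product `(y|z)_x = (d(x,y) + d(x,z) - d(y,z))/2`. -/
noncomputable def gromovProduct {X : Type*} [MetricSpace X] (x y z : X) : ℝ :=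
  (dist x y + dist x z - dist y z) / 2

/-- A geodesic segment joining `x` and `y`: the isometric image of the real
interval `[0, d(x,y)]` with endpoints `x` and `y`. -/
def IsGeodesicSegment {X : Type*} [MetricSpace X] (x y : X) (s : Set X) : Prop :=
  ∃ f : ℝ → X, f 0 = x ∧ f (dist x y) = y ∧ s = f '' Set.Icc (0 : ℝ) (dist x y) ∧
    ∀ u ∈ Set.Icc (0 : ℝ) (dist x y), ∀ v ∈ Set.Icc (0 : ℝ) (dist x y),
      dist (f u) (f v) = |u - v|

/-- A geodesic metric space: any two points are joined by a geodesic segment. -/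
def IsGeodesicSpace (X : Type*) [MetricSpace X] : Prop :=
  ∀ x y : X, ∃ s : Set X, IsGeodesicSegment x y s

/-- The Rips condition with constant `δ`: each side of every geodesic triangle is
contained in the `δ`-neighbourhood of the union of the other two sides. -/
def RipsCondition (X : Type*) [MetricSpace X] (δ : ℝ) : Prop :=
  ∀ x y z : X, ∀ s₁ s₂ s₃ : Set X,
    IsGeodesicSegment x y s₁ → IsGeodesicSegment y z s₂ → IsGeodesicSegment x z s₃ →
    ∀ p ∈ s₃, ∃ q ∈ s₁ ∪ s₂, dist p q ≤ δ

/-- A `δ`-hyperbolic space: a non-compact complete proper geodesic metric space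
satisfying the Rips condition with constant `δ`. -/
def IsDeltaHyperbolic (X : Type*) [MetricSpace X] (δ : ℝ) : Prop :=
  NoncompactSpace X ∧ CompleteSpace X ∧ ProperSpace X ∧ IsGeodesicSpace X ∧
    RipsCondition X δ

/-- The distance cocycle `b_z(x,y) = d(y,z) - d(x,z)` associated with a point `z`. -/
noncomputable def distCocycle {X : Type*} [MetricSpace X] (z x y : X) : ℝ :=
  dist y z - dist x z

/-- The function `ϱ_x(y,z) = exp(-(y|z)_x)` for `y ≠ z`, and `ϱ_x(y,y) = 0`. -/
noncomputable def varrho {X : Type*} [MetricSpace X] (x y z : X) : ℝ :=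
  open Classical in
  if y = z then 0 else Real.exp (-(gromovProduct x y z))

/-- The inner (pseudo)metric `ρ_x` determined by the function `ϱ_x ^ a`:
`ρ_x(y,z) = inf { ∑ ϱ_x(x_{i-1},x_i)^a : y = x_0, x_1, …, x_n = z }`. -/
noncomputable def rhoMetric {X : Type*} [MetricSpace X] (a : ℝ) (x y z : X) : ℝ :=
  sInf {S : ℝ | ∃ (n : ℕ) (c : ℕ → X), 0 < n ∧ c 0 = y ∧ c n = z ∧
    S = ∑ i ∈ Finset.range n, varrho x (c i) (c (i + 1)) ^ a}

lemma IsGeodesicSegment.dist_add_dist {X : Type*} [MetricSpace X] {x y p : X} {s : Set X}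
    (h : IsGeodesicSegment x y s) (hp : p ∈ s) : dist x p + dist p y = dist x y := by
  obtain ⟨f, h0, h1, rfl, hf⟩ := h
  obtain ⟨t, ht, rfl⟩ := hp
  have hd : (0 : ℝ) ≤ dist x y := dist_nonneg
  have a := hf 0 ⟨le_rfl, hd⟩ t ht
  have b := hf t ht (dist x y) ⟨hd, le_rfl⟩
  rw [h0, zero_sub, abs_neg, abs_of_nonneg ht.1] at a
  rw [h1, abs_of_nonpos (by linarith [ht.2])] at b
  linarith

lemma IsGeodesicSegment.exists_dist_eq {X : Type*} [MetricSpace X] {x y : X} {s : Set X}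
    (h : IsGeodesicSegment x y s) {t : ℝ} (ht : t ∈ Set.Icc (0 : ℝ) (dist x y)) :
    ∃ p ∈ s, dist x p = t := by
  obtain ⟨f, h0, h1, rfl, hf⟩ := h
  refine ⟨f t, ⟨t, ht, rfl⟩, ?_⟩
  have a := hf 0 ⟨le_rfl, dist_nonneg⟩ t ht
  rwa [h0, zero_sub, abs_neg, abs_of_nonneg ht.1] at a

lemma distCocycle_le_add {X : Type*} [MetricSpace X] {δ : ℝ} (hδ : 0 < δ)
    (hG : IsGeodesicSpace X) (hR : RipsCondition X δ) {x y z w : X}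
    (hK : dist x y + 6 * δ ≤ gromovProduct x z w) :
    distCocycle z x y ≤ distCocycle w x y + 4 * δ := by
  unfold gromovProduct at hK
  obtain ⟨sxy, hxy⟩ := hG x y
  obtain ⟨syw, hyw⟩ := hG y w
  obtain ⟨sxw, hxw⟩ := hG x w
  obtain ⟨swz, hwz⟩ := hG w z
  obtain ⟨sxz, hxz⟩ := hG x z
  have hd : (0 : ℝ) ≤ dist x y := dist_nonneg
  obtain ⟨p, hp, hpd⟩ := hxz.exists_dist_eq (t := dist x y + 3 * δ)
    ⟨by linarith, by linarith [dist_triangle x z w]⟩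
  have hpz := hxz.dist_add_dist hp
  obtain ⟨r, hr | hr, hpr⟩ := hR x w z sxw swz sxz hxw hwz hxz p hp
  · obtain ⟨q, hq | hq, hrq⟩ := hR x y w sxy syw sxw hxy hyw hxw r hr
    · have := hxy.dist_add_dist hq
      have : (0 : ℝ) ≤ dist q y := dist_nonneg
      linarith [dist_triangle x q p, dist_triangle p r q, dist_comm p q]
    · have hqw := hyw.dist_add_dist hq
      have hpq : dist p q ≤ 2 * δ := by linarith [dist_triangle p r q]
      have h1 := dist_triangle4 y q p z
      have h2 := dist_triangle4 x p q w
      rw [dist_comm q p] at h1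
      unfold distCocycle
      linarith
  · have := hwz.dist_add_dist hr
    -- The average of the next two bounds is `(z|w)_x ≤ d(x,r)`.
    have h1 := dist_triangle x r z
    have h2 := dist_triangle x r w
    rw [dist_comm r w] at h2
    linarith [dist_triangle x p r, dist_comm w z]

/-- If `(z_n)` converges to a boundary point of a `δ`-hyperbolic space `X`
(i.e. `(z_n|z_m)_x → ∞` as `min(n,m) → ∞`), then for all `x, y ∈ X`
`limsup_n b_{z_n}(x,y) - liminf_n b_{z_n}(x,y) ≤ C₂` with `C₂ = (30 log 2) δ`. -/
theorem limsup_sub_liminf_distCocycle_le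
    {X : Type*} [MetricSpace X] (δ C₂ : ℝ) (hδ : 0 < δ)
    (hC₂ : C₂ = 30 * Real.log 2 * δ) (hX : IsDeltaHyperbolic X δ)
    (z : ℕ → X) (x₀ : X)
    (hconv : ∀ M : ℝ, ∃ N : ℕ, ∀ n m : ℕ, N ≤ n → N ≤ m →
      M ≤ gromovProduct x₀ (z n) (z m)) :
    ∀ x y : X,
      Filter.limsup (fun n => distCocycle (z n) x y) Filter.atTop -
        Filter.liminf (fun n => distCocycle (z n) x y) Filter.atTop ≤ C₂ := by
  intro x y
  obtain ⟨-, -, -, hG, hR⟩ := hX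
  obtain ⟨N, hN⟩ := hconv (dist x y + 6 * δ + dist x₀ x)
  have key : ∀ n m, N ≤ n → N ≤ m →
      distCocycle (z n) x y ≤ distCocycle (z m) x y + 4 * δ := by
    intro n m hn hm
    apply distCocycle_le_add hδ hG hR
    have h := hN n m hn hm
    unfold gromovProduct at h ⊢
    linarith [dist_triangle x₀ x (z n), dist_triangle x₀ x (z m)]
  have hle : IsBoundedUnder (· ≤ ·) atTop (fun n => distCocycle (z n) x y) :=
    isBoundedUnder_of ⟨dist x y, fun n => by
      unfold distCocycle; linarith [dist_triangle y x (z n), dist_comm x y]⟩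
  have hge : IsBoundedUnder (· ≥ ·) atTop (fun n => distCocycle (z n) x y) :=
    isBoundedUnder_of ⟨-dist x y, fun n => by
      unfold distCocycle; linarith [dist_triangle x y (z n)]⟩
  have hsup : ∀ m, N ≤ m →
      limsup (fun n => distCocycle (z n) x y) atTop ≤ distCocycle (z m) x y + 4 * δ :=
    fun m hm => limsup_le_of_le hge.isCoboundedUnder_le
      (eventually_atTop.2 ⟨N, fun n hn => key n m hn hm⟩)
  have hinf : limsup (fun n => distCocycle (z n) x y) atTop - 4 * δ ≤
      liminf (fun n => distCocycle (z n) x y) atTop :=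
    le_liminf_of_le hle.isCoboundedUnder_ge
      (eventually_atTop.2 ⟨N, fun m hm => by linarith [hsup m hm]⟩)
  have hlog : 4 * δ ≤ 30 * Real.log 2 * δ :=
    mul_le_mul_of_nonneg_right (by linarith [Real.log_two_gt_d9]) hδ.le
  linarith
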